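/- Fix a dataset (r_j, a_j) ∈ ℝ × ℝ^m, j = 1,…,n, with |r_j| ≤ r̄ and ‖a_j‖_∞ ≤ ā for all j, let d ∈ ℝ^m satisfy 0 < d̲ ≤ d_i ≤ d̄ for all i, and assume the data are in general position: for every p ∈ ℝ^m there are at most m indices j with r_j = a_jᵀp. Let σ be a uniformly random permutation of {1,…,n}, let R_t*(σ) denote the optimal value of the scaled LP: maximize Σ_{j=1}^t r_{σ(j)} x_j over x ∈ [0,1]^t subject to Σ_{j=1}^t a_{i,σ(j)} x_j ≤ t·d_i for i = 1,…,m, and let R_n* be the optimal value of the full LP (the case t = n). Then Σ_{t=1}^n ( (1/n)·R_n* − (1/t)·E[R_t*(σ)] ) ≤ m·r̄ + (r̄/d̲)·√n·log n + m·r̄·log n + r̄·max{16ā², e^{16ā²}, e}, where the expectation is the average over all n! permutations. -/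

import Mathlib

/-- Optimal value of the `t`-prefix scaled LP
`max Σ_{j<t} r_j x_j  s.t.  Σ_{j<t} a_{ij} x_j ≤ t d_i, x ∈ [0,1]`. (Coordinates with
index `≥ t` are unconstrained and do not enter the objective or the constraints, so
this is the optimal value of the LP on the first `t` columns.) -/
noncomputable def prefLPval (n m : ℕ) (r : Fin n → ℝ) (a : Fin n → Fin m → ℝ)
    (d : Fin m → ℝ) (t : ℕ) : ℝ :=
  sSup ((fun x : Fin n → ℝ =>
      ∑ j ∈ Finset.univ.filter (fun j : Fin n => (j : ℕ) < t), r j * x j) ''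
    {x | (∀ j, 0 ≤ x j ∧ x j ≤ 1) ∧
      ∀ i, ∑ j ∈ Finset.univ.filter (fun j : Fin n => (j : ℕ) < t), a j i * x j ≤
        (t : ℝ) * d i})

/-!
Sampling without replacement satisfies the Maclaurin-type inequality
`𝔼 ∏ j ∈ s, x (σ j) ≤ (𝔼 x) ^ #s` for `x ≥ 0`, because AM-GM together with the swap of two positions
shows that repeating a factor already present in a product can only increase the mean. Applied to
exponentials it turns Hoeffding's lemma for a single draw into a sub-Gaussian bound for the sum of a
random sample. Restrict a solution `x` of the full LP to `t` random columns: by the maximal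
inequality, its worst budget overrun is at most `ā √(2 t log (m + 1))` on average. Shrinking `x`
makes it feasible again and costs at most `r̄ / d̲` per unit of overrun, so the mean optimal value
per column drops by `O(1 / √t)`. Summing over `t` bounds the regret by
`2 (r̄ / d̲) ā √(2 n log (m + 1))`; it is also at most `n r̄`, and the bound of the theorem
dominates the smaller of the two.
-/

section PermutationSampling

open Finset Equiv
open scoped BigOperators

variable {ι : Type*} [Fintype ι] [DecidableEq ι]

theorem expect_perm_apply_mul_prod_congr {s : Finset ι} {i l : ι} (hi : i ∉ s) (hl : l ∉ s)
    (f x : ι → ℝ) :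
    𝔼 σ : Perm ι, f (σ i) * ∏ j ∈ s, x (σ j) = 𝔼 σ : Perm ι, f (σ l) * ∏ j ∈ s, x (σ j) := by
  refine Fintype.expect_equiv (Equiv.mulRight (swap i l)) _ _ fun σ ↦ ?_
  have hfix : ∀ j ∈ s, swap i l j = j := fun j hj ↦
    swap_apply_of_ne_of_ne (ne_of_mem_of_not_mem hj hi) (ne_of_mem_of_not_mem hj hl)
  simp only [coe_mulRight, Perm.mul_apply, swap_apply_right]
  exact congrArg _ (prod_congr rfl fun j hj ↦ by rw [hfix j hj])

theorem expect_perm_apply (f : ι → ℝ) (i : ι) : 𝔼 σ : Perm ι, f (σ i) = 𝔼 j, f j := by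
  have : Nonempty ι := ⟨i⟩
  calc 𝔼 σ : Perm ι, f (σ i) = 𝔼 l, 𝔼 σ : Perm ι, f (σ l) := by
        rw [← Fintype.expect_const (ι := ι) (𝔼 σ : Perm ι, f (σ i))]
        exact expect_congr rfl fun l _ ↦ by
          simpa using expect_perm_apply_mul_prod_congr (notMem_empty i) (notMem_empty l) f f
    _ = 𝔼 σ : Perm ι, 𝔼 l, f (σ l) := expect_comm _ _ _
    _ = 𝔼 _σ : Perm ι, 𝔼 j, f j :=
        expect_congr rfl fun σ _ ↦ Fintype.expect_equiv σ _ _ fun _ ↦ rfl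
    _ = 𝔼 j, f j := Fintype.expect_const _

theorem expect_perm_sum_apply (f : ι → ℝ) (s : Finset ι) :
    𝔼 σ : Perm ι, ∑ j ∈ s, f (σ j) = #s * 𝔼 j, f j := by
  rw [expect_sum_comm, sum_congr rfl fun j _ ↦ expect_perm_apply f j, sum_const, nsmul_eq_mul]

theorem expect_perm_mul_prod_le_of_notMem {s : Finset ι} {x : ι → ℝ} (hx : 0 ≤ x) {i : ι}
    (hi : i ∉ s) (l : ι) :
    𝔼 σ : Perm ι, x (σ i) * ∏ j ∈ s, x (σ j) ≤ 𝔼 σ : Perm ι, x (σ l) * ∏ j ∈ s, x (σ j) := by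
  by_cases hl : l ∈ s
  · set P : Perm ι → ℝ := fun σ ↦ ∏ j ∈ s.erase l, x (σ j)
    have hP : ∀ σ, 0 ≤ P σ := fun σ ↦ prod_nonneg fun j _ ↦ hx _
    have hsplit : ∀ σ : Perm ι, ∏ j ∈ s, x (σ j) = x (σ l) * P σ := fun σ ↦
      (mul_prod_erase s (fun j ↦ x (σ j)) hl).symm
    have hsq : 𝔼 σ : Perm ι, x (σ i) ^ 2 * P σ = 𝔼 σ : Perm ι, x (σ l) ^ 2 * P σ :=
      expect_perm_apply_mul_prod_congr (fun h ↦ hi (mem_of_mem_erase h)) (notMem_erase l s)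
        (fun j ↦ x j ^ 2) x
    have hamgm : 𝔼 σ : Perm ι, 2 * (x (σ i) * (x (σ l) * P σ)) ≤
        𝔼 σ : Perm ι, (x (σ i) ^ 2 * P σ + x (σ l) ^ 2 * P σ) :=
      expect_le_expect fun σ _ ↦ by
        nlinarith [mul_le_mul_of_nonneg_right (two_mul_le_add_sq (x (σ i)) (x (σ l))) (hP σ)]
    rw [← mul_expect, expect_add_distrib, hsq, ← two_mul] at hamgm
    simpa only [hsplit, sq, mul_assoc] using le_of_mul_le_mul_left hamgm two_pos
  · exact (expect_perm_apply_mul_prod_congr hi hl x x).le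

theorem expect_perm_prod_le_pow {x : ι → ℝ} (hx : 0 ≤ x) (s : Finset ι) :
    𝔼 σ : Perm ι, ∏ j ∈ s, x (σ j) ≤ (𝔼 j, x j) ^ #s := by
  induction s using Finset.induction with
  | empty => simp
  | insert i s hi ih =>
    have : Nonempty ι := ⟨i⟩
    calc 𝔼 σ : Perm ι, ∏ j ∈ insert i s, x (σ j)
        = 𝔼 σ : Perm ι, x (σ i) * ∏ j ∈ s, x (σ j) := by simp only [prod_insert hi]
      _ ≤ 𝔼 l, 𝔼 σ : Perm ι, x (σ l) * ∏ j ∈ s, x (σ j) :=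
          le_expect univ_nonempty fun l _ ↦ expect_perm_mul_prod_le_of_notMem hx hi l
      _ = 𝔼 σ : Perm ι, (𝔼 j, x j) * ∏ j ∈ s, x (σ j) := by
          rw [expect_comm]
          refine expect_congr rfl fun σ _ ↦ ?_
          rw [← expect_mul, Fintype.expect_equiv σ (fun l ↦ x (σ l)) x fun _ ↦ rfl]
      _ ≤ (𝔼 j, x j) ^ #(insert i s) := by
          rw [← mul_expect, card_insert_of_notMem hi, pow_succ']
          exact mul_le_mul_of_nonneg_left ih (expect_nonneg fun j _ ↦ hx j)

end PermutationSampling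

section Hoeffding

open Finset Equiv MeasureTheory ProbabilityTheory
open scoped BigOperators

theorem integral_uniformOfFintype {ι : Type*} [Fintype ι] [Nonempty ι] [MeasurableSpace ι]
    [MeasurableSingletonClass ι] (f : ι → ℝ) :
    ∫ j, f j ∂(PMF.uniformOfFintype ι).toMeasure = 𝔼 j, f j := by
  simp [PMF.integral_eq_sum, Fintype.expect_eq_sum_div_card, div_eq_inv_mul, mul_sum]

theorem expect_exp_mul_sub_expect_le {ι : Type*} [Fintype ι] {b : ι → ℝ} {u v : ℝ}
    (hb : ∀ j, b j ∈ Set.Icc u v) (lam : ℝ) :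
    𝔼 j, Real.exp (lam * (b j - 𝔼 k, b k)) ≤ Real.exp (lam ^ 2 * (v - u) ^ 2 / 8) := by
  cases isEmpty_or_nonempty ι
  · simp [univ_eq_empty, Real.exp_nonneg]
  · let _ : MeasurableSpace ι := ⊤
    have hsub := hasSubgaussianMGF_of_mem_Icc (μ := (PMF.uniformOfFintype ι).toMeasure)
      (measurable_of_finite b).aemeasurable (.of_forall hb)
    have hmgf := hsub.mgf_le lam
    rw [mgf, integral_uniformOfFintype, integral_uniformOfFintype] at hmgf
    convert hmgf using 2
    simp only [NNReal.coe_pow, NNReal.coe_div, coe_nnnorm, NNReal.coe_ofNat, div_pow,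
      Real.norm_eq_abs, sq_abs]
    ring

theorem expect_perm_exp_mul_sum_sub_le {ι : Type*} [Fintype ι] [DecidableEq ι] {b : ι → ℝ}
    {u v : ℝ} (hb : ∀ j, b j ∈ Set.Icc u v) (s : Finset ι) (lam : ℝ) :
    𝔼 σ : Perm ι, Real.exp (lam * (∑ j ∈ s, b (σ j) - #s * 𝔼 k, b k)) ≤
      Real.exp (lam ^ 2 * (#s * (v - u) ^ 2 / 8)) :=
  calc 𝔼 σ : Perm ι, Real.exp (lam * (∑ j ∈ s, b (σ j) - #s * 𝔼 k, b k))
      = 𝔼 σ : Perm ι, ∏ j ∈ s, Real.exp (lam * (b (σ j) - 𝔼 k, b k)) := by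
        simp only [← Real.exp_sum, ← mul_sum, sum_sub_distrib, sum_const, nsmul_eq_mul]
    _ ≤ (𝔼 j, Real.exp (lam * (b j - 𝔼 k, b k))) ^ #s :=
        expect_perm_prod_le_pow (x := fun j ↦ Real.exp (lam * (b j - 𝔼 k, b k)))
          (fun _ ↦ Real.exp_nonneg _) s
    _ ≤ Real.exp (lam ^ 2 * (v - u) ^ 2 / 8) ^ #s :=
        pow_le_pow_left₀ (expect_nonneg fun _ _ ↦ Real.exp_nonneg _)
          (expect_exp_mul_sub_expect_le hb lam) _
    _ = Real.exp (lam ^ 2 * (#s * (v - u) ^ 2 / 8)) := by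
        rw [← Real.exp_nat_mul]
        ring_nf

end Hoeffding

section MaximalInequality

open Finset
open scoped BigOperators

theorem exp_expect_le {Ω : Type*} [Fintype Ω] [Nonempty Ω] (z : Ω → ℝ) :
    Real.exp (𝔼 ω, z ω) ≤ 𝔼 ω, Real.exp (z ω) := by
  have hcard : (Fintype.card Ω : ℝ) ≠ 0 := Nat.cast_ne_zero.2 Fintype.card_ne_zero
  have hjensen := convexOn_exp.map_sum_le (t := univ) (w := fun _ ↦ (Fintype.card Ω : ℝ)⁻¹)
    (p := z) (fun _ _ ↦ by positivity) (by simp [hcard]) fun _ _ ↦ Set.mem_univ _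
  simp only [smul_eq_mul, ← mul_sum] at hjensen
  simpa only [inv_mul_eq_div, ← Fintype.expect_eq_sum_div_card] using hjensen

theorem exp_mul_iSup_posPart_le {κ : Type*} [Fintype κ] (lam : ℝ) (v : κ → ℝ) :
    Real.exp (lam * ⨆ i, (v i)⁺) ≤ 1 + ∑ i, Real.exp (lam * v i) := by
  have hsum : 0 ≤ ∑ i, Real.exp (lam * v i) := sum_nonneg fun _ _ ↦ Real.exp_nonneg _
  cases isEmpty_or_nonempty κ
  · simp
  · obtain ⟨i, hi⟩ := exists_eq_ciSup_of_finite (f := fun i ↦ (v i)⁺)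
    rw [← hi]
    rcases le_total (v i) 0 with hneg | hpos
    · simpa [posPart_of_nonpos hneg]
    · rw [posPart_of_nonneg hpos]
      have := single_le_sum (fun k _ ↦ Real.exp_nonneg (lam * v k)) (mem_univ i)
      linarith

theorem expect_iSup_posPart_le_sqrt {Ω κ : Type*} [Fintype Ω] [Fintype κ] {Z : Ω → κ → ℝ} {c : ℝ}
    (hc : 0 ≤ c)
    (hZ : ∀ lam, 0 ≤ lam → ∀ i, 𝔼 ω, Real.exp (lam * Z ω i) ≤ Real.exp (lam ^ 2 * c)) :
    𝔼 ω, ⨆ i, (Z ω i)⁺ ≤ √(4 * c * Real.log (Fintype.card κ + 1)) := by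
  cases isEmpty_or_nonempty Ω
  · simp [univ_eq_empty]
  set E : ℝ := 𝔼 ω, ⨆ i, (Z ω i)⁺ with hE
  set L : ℝ := Real.log (Fintype.card κ + 1)
  have hE0 : 0 ≤ E := expect_nonneg fun ω _ ↦ Real.iSup_nonneg fun i ↦ posPart_nonneg _
  have hL0 : 0 ≤ L := Real.log_nonneg (by simp)
  have hchernoff : ∀ lam, 0 ≤ lam → lam * E ≤ L + lam ^ 2 * c := by
    intro lam hlam
    have hc1 : 1 ≤ Real.exp (lam ^ 2 * c) := Real.one_le_exp (by positivity)
    have hexp : Real.exp (lam * E) ≤ (Fintype.card κ + 1) * Real.exp (lam ^ 2 * c) :=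
      calc Real.exp (lam * E) ≤ 𝔼 ω, Real.exp (lam * ⨆ i, (Z ω i)⁺) := by
            rw [hE, mul_expect]
            exact exp_expect_le _
        _ ≤ 𝔼 ω, (1 + ∑ i, Real.exp (lam * Z ω i)) :=
            expect_le_expect fun ω _ ↦ exp_mul_iSup_posPart_le lam (Z ω)
        _ = 1 + ∑ i, 𝔼 ω, Real.exp (lam * Z ω i) := by
            rw [expect_add_distrib, Fintype.expect_const, expect_sum_comm]
        _ ≤ 1 + ∑ _i : κ, Real.exp (lam ^ 2 * c) := by
            gcongr with i
            exact hZ lam hlam i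
        _ ≤ (Fintype.card κ + 1) * Real.exp (lam ^ 2 * c) := by
            rw [sum_const, card_univ, nsmul_eq_mul]
            linarith
    rwa [← Real.exp_log (x := Fintype.card κ + 1) (by positivity), ← Real.exp_add,
      Real.exp_le_exp] at hexp
  have hquad : ∀ lam : ℝ, 0 ≤ c * (lam * lam) + -E * lam + L := by
    intro lam
    rcases le_total 0 lam with hlam | hlam
    · linarith [hchernoff lam hlam]
    · have := mul_nonneg hE0 (neg_nonneg.2 hlam)
      have := mul_nonneg hc (mul_self_nonneg lam)
      linarith
  -- Unlike the choice `lam = E / (2 * c)`, the discriminant also covers `c = 0`.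
  have hdiscrim := discrim_le_zero hquad
  rw [discrim, neg_sq, sub_nonpos] at hdiscrim
  exact Real.le_sqrt_of_sq_le hdiscrim

end MaximalInequality

section SampledLP

open Finset Equiv
open scoped BigOperators

variable {ι κ : Type*}

/-- The feasible set of the LP on the columns in `s`, with budget `d i` per column for resource
`i`. As in `prefLPval`, coordinates outside `s` are kept and only restricted to `[0, 1]`. -/
def sampledLPFeasible (a : ι → κ → ℝ) (d : κ → ℝ) (s : Finset ι) : Set (ι → ℝ) :=
  {x | (∀ j, 0 ≤ x j ∧ x j ≤ 1) ∧ ∀ i, ∑ j ∈ s, a j i * x j ≤ #s * d i}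

/-- The optimal value of the LP on the columns in `s` with budgets scaled by `#s`: the quantity
`R_t*` of the paper, for an arbitrary set of `t` columns in place of the first `t`. -/
noncomputable def sampledLPValue (r : ι → ℝ) (a : ι → κ → ℝ) (d : κ → ℝ) (s : Finset ι) : ℝ :=
  sSup ((fun x : ι → ℝ ↦ ∑ j ∈ s, r j * x j) '' sampledLPFeasible a d s)

variable {r x : ι → ℝ} {a : ι → κ → ℝ} {d : κ → ℝ} {s : Finset ι} {rbar abar dlb : ℝ}

theorem sum_mul_le_sum_abs (hx : ∀ j, 0 ≤ x j ∧ x j ≤ 1) : ∑ j ∈ s, r j * x j ≤ ∑ j ∈ s, |r j| :=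
  sum_le_sum fun j _ ↦
    calc r j * x j ≤ |r j| * x j := mul_le_mul_of_nonneg_right (le_abs_self _) (hx j).1
      _ ≤ |r j| := mul_le_of_le_one_right (abs_nonneg _) (hx j).2

theorem sum_le_sampledLPValue (hx : x ∈ sampledLPFeasible a d s) :
    ∑ j ∈ s, r j * x j ≤ sampledLPValue r a d s := by
  refine le_csSup ⟨∑ j ∈ s, |r j|, ?_⟩ ⟨x, hx, rfl⟩
  rintro _ ⟨y, hy, rfl⟩
  exact sum_mul_le_sum_abs hy.1

theorem zero_mem_sampledLPFeasible (hd : 0 ≤ d) : 0 ∈ sampledLPFeasible a d s :=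
  ⟨by simp, fun i ↦ by simpa using mul_nonneg (Nat.cast_nonneg _) (hd i)⟩

theorem sampledLPValue_nonneg (hd : 0 ≤ d) : 0 ≤ sampledLPValue r a d s := by
  simpa using sum_le_sampledLPValue (r := r) (zero_mem_sampledLPFeasible (a := a) (s := s) hd)

theorem sampledLPValue_le (hd : 0 ≤ d) {C : ℝ}
    (h : ∀ x ∈ sampledLPFeasible a d s, ∑ j ∈ s, r j * x j ≤ C) : sampledLPValue r a d s ≤ C :=
  csSup_le (Set.Nonempty.image _ ⟨0, zero_mem_sampledLPFeasible hd⟩) (Set.forall_mem_image.2 h)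

theorem sampledLPValue_le_card_mul (hd : 0 ≤ d) (hr : ∀ j, |r j| ≤ rbar) :
    sampledLPValue r a d s ≤ #s * rbar :=
  sampledLPValue_le hd fun _ hx ↦ (sum_mul_le_sum_abs hx.1).trans <| by
    simpa only [nsmul_eq_mul] using sum_le_card_nsmul s _ _ fun j _ ↦ hr j

theorem sum_le_one_add_mul_sampledLPValue {w : ℝ} (hw : 0 ≤ w) (hx : ∀ j, 0 ≤ x j ∧ x j ≤ 1)
    (h : ∀ i, ∑ j ∈ s, a j i * x j ≤ (1 + w) * (#s * d i)) :
    ∑ j ∈ s, r j * x j ≤ (1 + w) * sampledLPValue r a d s := by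
  have hw1 : 0 < 1 + w := by positivity
  have hscale : ∀ f : ι → ℝ,
      ∑ j ∈ s, f j * ((1 + w)⁻¹ • x) j = (1 + w)⁻¹ * ∑ j ∈ s, f j * x j := fun f ↦ by
    simp only [Pi.smul_apply, smul_eq_mul, mul_sum, mul_left_comm]
  have hfeas : (1 + w)⁻¹ • x ∈ sampledLPFeasible a d s := by
    refine ⟨fun j ↦ ⟨mul_nonneg (by positivity) (hx j).1,
      mul_le_one₀ (inv_le_one_of_one_le₀ (by linarith)) (hx j).1 (hx j).2⟩, fun i ↦ ?_⟩
    rw [hscale fun j ↦ a j i, inv_mul_le_iff₀ hw1]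
    exact h i
  have := sum_le_sampledLPValue (r := r) hfeas
  rwa [hscale, inv_mul_le_iff₀ hw1] at this

/-- The largest amount by which `x` overruns a budget of the LP on the columns in `s`; it is `0` if
all the budgets are met. -/
noncomputable def maxViolation (a : ι → κ → ℝ) (d : κ → ℝ) (s : Finset ι) (x : ι → ℝ) : ℝ :=
  ⨆ i, (∑ j ∈ s, a j i * x j - #s * d i)⁺

theorem maxViolation_nonneg : 0 ≤ maxViolation a d s x :=
  Real.iSup_nonneg fun _ ↦ posPart_nonneg _

theorem sum_le_add_maxViolation [Finite κ] (i : κ) :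
    ∑ j ∈ s, a j i * x j ≤ #s * d i + maxViolation a d s x :=
  sub_le_iff_le_add'.1 <| (le_posPart _).trans <|
    le_ciSup (f := fun i ↦ (∑ j ∈ s, a j i * x j - #s * d i)⁺) (Set.finite_range _).bddAbove i

theorem sum_le_sampledLPValue_add_maxViolation [Finite κ] (hdlb : 0 < dlb)
    (hd : ∀ i, dlb ≤ d i) (hr : ∀ j, |r j| ≤ rbar) (hx : ∀ j, 0 ≤ x j ∧ x j ≤ 1) :
    ∑ j ∈ s, r j * x j ≤ sampledLPValue r a d s + rbar / dlb * maxViolation a d s x := by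
  have hd0 : 0 ≤ d := fun i ↦ hdlb.le.trans (hd i)
  rcases s.eq_empty_or_nonempty with rfl | hs
  · have hviol : maxViolation a d ∅ x = 0 := by simp [maxViolation]
    simpa [hviol] using sampledLPValue_nonneg (r := r) (a := a) (s := ∅) hd0
  have : (0 : ℝ) < #s := Nat.cast_pos.2 hs.card_pos
  set Z := maxViolation a d s x
  set w := Z / (#s * dlb) with hwdef
  have hw : 0 ≤ w := div_nonneg maxViolation_nonneg (by positivity)
  have hZ : Z = w * (#s * dlb) := by rw [hwdef]; field_simp
  calc ∑ j ∈ s, r j * x j ≤ (1 + w) * sampledLPValue r a d s := by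
        refine sum_le_one_add_mul_sampledLPValue hw hx fun i ↦ ?_
        calc ∑ j ∈ s, a j i * x j ≤ #s * d i + w * (#s * dlb) :=
              hZ ▸ sum_le_add_maxViolation i
          _ ≤ #s * d i + w * (#s * d i) := by gcongr; exact hd i
          _ = (1 + w) * (#s * d i) := by ring
    _ ≤ sampledLPValue r a d s + w * (#s * rbar) := by
        rw [one_add_mul]
        gcongr
        exact sampledLPValue_le_card_mul hd0 hr
    _ = sampledLPValue r a d s + rbar / dlb * Z := by rw [hZ]; field_simp

variable [Fintype ι] [DecidableEq ι]

/-- The expected amount by which the optimal value per column drops when the LP on all columns is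
replaced by the LP on a random sample `σ '' s`, with `σ` a uniformly random permutation. -/
noncomputable def expectedShortfall (r : ι → ℝ) (a : ι → κ → ℝ) (d : κ → ℝ) (s : Finset ι) : ℝ :=
  sampledLPValue r a d univ / Fintype.card ι -
    (𝔼 σ : Perm ι, sampledLPValue (r ∘ σ) (a ∘ σ) d s) / #s

theorem expectedShortfall_le_of_abs_le [Nonempty ι] (hd : 0 ≤ d) (hr : ∀ j, |r j| ≤ rbar) :
    expectedShortfall r a d s ≤ rbar := by
  have hfull : sampledLPValue r a d univ / Fintype.card ι ≤ rbar :=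
    (div_le_iff₀' (by positivity)).2 (sampledLPValue_le_card_mul hd hr)
  have hsample : 0 ≤ (𝔼 σ : Perm ι, sampledLPValue (r ∘ σ) (a ∘ σ) d s) / #s :=
    div_nonneg (expect_nonneg fun σ _ ↦ sampledLPValue_nonneg hd) (Nat.cast_nonneg _)
  exact sub_le_iff_le_add.2 (hfull.trans (le_add_of_nonneg_right hsample))

variable [Fintype κ]

theorem expect_maxViolation_le (ha : ∀ j i, |a j i| ≤ abar) (hx : x ∈ sampledLPFeasible a d univ)
    (s : Finset ι) :
    𝔼 σ : Perm ι, maxViolation (a ∘ σ) d s (x ∘ σ) ≤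
      √(2 * abar ^ 2 * #s * Real.log (Fintype.card κ + 1)) := by
  have hmem : ∀ i j, a j i * x j ∈ Set.Icc (-abar) abar := fun i j ↦ by
    rw [Set.mem_Icc, ← abs_le, abs_mul, abs_of_nonneg (hx.1 j).1]
    exact (mul_le_of_le_one_right (abs_nonneg _) (hx.1 j).2).trans (ha j i)
  have hmean : ∀ i, #s * 𝔼 j, a j i * x j ≤ #s * d i := fun i ↦ by
    rcases s.eq_empty_or_nonempty with rfl | ⟨j, -⟩
    · simp
    · have : Nonempty ι := ⟨j⟩
      have := hx.2 i
      gcongr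
      rwa [Fintype.expect_eq_sum_div_card, div_le_iff₀' (by positivity)]
  refine (expect_iSup_posPart_le_sqrt (c := #s * (abar - -abar) ^ 2 / 8) (by positivity)
    fun lam hlam i ↦ ?_).trans_eq (congrArg Real.sqrt (by ring))
  refine le_trans (expect_le_expect fun σ _ ↦ Real.exp_le_exp.2 ?_)
    (expect_perm_exp_mul_sum_sub_le (hmem i) s lam)
  exact mul_le_mul_of_nonneg_left (sub_le_sub_left (hmean i) _) hlam

theorem card_mul_expect_le_expect_sampledLPValue_add (hdlb : 0 < dlb) (hd : ∀ i, dlb ≤ d i)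
    (hrbar : 0 ≤ rbar) (hr : ∀ j, |r j| ≤ rbar) (ha : ∀ j i, |a j i| ≤ abar)
    (hx : x ∈ sampledLPFeasible a d univ) (s : Finset ι) :
    #s * 𝔼 j, r j * x j ≤ 𝔼 σ : Perm ι, sampledLPValue (r ∘ σ) (a ∘ σ) d s +
      rbar / dlb * √(2 * abar ^ 2 * #s * Real.log (Fintype.card κ + 1)) :=
  calc #s * 𝔼 j, r j * x j = 𝔼 σ : Perm ι, ∑ j ∈ s, r (σ j) * x (σ j) :=
        (expect_perm_sum_apply (fun j ↦ r j * x j) s).symm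
    _ ≤ 𝔼 σ : Perm ι, (sampledLPValue (r ∘ σ) (a ∘ σ) d s +
          rbar / dlb * maxViolation (a ∘ σ) d s (x ∘ σ)) :=
        expect_le_expect fun σ _ ↦ sum_le_sampledLPValue_add_maxViolation hdlb hd
          (fun j ↦ hr (σ j)) fun j ↦ hx.1 (σ j)
    _ ≤ 𝔼 σ : Perm ι, sampledLPValue (r ∘ σ) (a ∘ σ) d s +
          rbar / dlb * √(2 * abar ^ 2 * #s * Real.log (Fintype.card κ + 1)) := by
        rw [expect_add_distrib, ← mul_expect]
        gcongr
        exact expect_maxViolation_le ha hx s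

theorem expectedShortfall_le_sqrt (hdlb : 0 < dlb) (hd : ∀ i, dlb ≤ d i)
    (hr : ∀ j, |r j| ≤ rbar) (ha : ∀ j i, |a j i| ≤ abar) (hs : s.Nonempty) :
    expectedShortfall r a d s ≤
      rbar / dlb * √(2 * abar ^ 2 * Real.log (Fintype.card κ + 1)) * (1 / √(#s : ℝ)) := by
  have hs0 : (0 : ℝ) < #s := Nat.cast_pos.2 hs.card_pos
  have hι0 : (0 : ℝ) < Fintype.card ι := hs0.trans_le (Nat.cast_le.2 (card_le_univ s))
  have hrbar : 0 ≤ rbar := (abs_nonneg _).trans (hr hs.choose)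
  set E := 𝔼 σ : Perm ι, sampledLPValue (r ∘ σ) (a ∘ σ) d s
  set B := rbar / dlb * √(2 * abar ^ 2 * Real.log (Fintype.card κ + 1))
  have hB : rbar / dlb * √(2 * abar ^ 2 * #s * Real.log (Fintype.card κ + 1)) = B * √(#s : ℝ) := by
    rw [mul_right_comm (2 * abar ^ 2), Real.sqrt_mul' _ hs0.le, ← mul_assoc]
  have hfull : sampledLPValue r a d univ ≤ Fintype.card ι * ((E + B * √(#s : ℝ)) / #s) := by
    refine sampledLPValue_le (fun i ↦ hdlb.le.trans (hd i)) fun x hx ↦ ?_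
    rw [← div_le_iff₀' hι0, ← Fintype.expect_eq_sum_div_card, le_div_iff₀' hs0, ← hB]
    exact card_mul_expect_le_expect_sampledLPValue_add hdlb hd hrbar hr ha hx s
  calc expectedShortfall r a d s ≤ (E + B * √(#s : ℝ)) / #s - E / #s :=
        sub_le_sub_right ((div_le_iff₀' hι0).2 hfull) _
    _ = B * (1 / √(#s : ℝ)) := by
        rw [← sub_div, add_sub_cancel_left, mul_div_assoc, Real.sqrt_div_self']

end SampledLP

section Prefixes

open Finset Equiv
open scoped BigOperators

theorem sum_Icc_one_div_sqrt_le (n : ℕ) : ∑ t ∈ Icc 1 n, 1 / √(t : ℝ) ≤ 2 * √(n : ℝ) := by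
  induction n with
  | zero => simp
  | succ k ih =>
    have hpos : 0 < √((k + 1 : ℕ) : ℝ) := Real.sqrt_pos.2 (by positivity)
    have hsq : √((k + 1 : ℕ) : ℝ) ^ 2 = √(k : ℝ) ^ 2 + 1 := by
      rw [Real.sq_sqrt (by positivity), Real.sq_sqrt (by positivity), Nat.cast_succ]
    have hstep : 1 / √((k + 1 : ℕ) : ℝ) ≤ 2 * √((k + 1 : ℕ) : ℝ) - 2 * √(k : ℝ) := by
      rw [div_le_iff₀ hpos]
      linarith [sq_nonneg (√((k + 1 : ℕ) : ℝ) - √(k : ℝ))]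
    rw [sum_Icc_succ_top (Nat.le_add_left 1 k)]
    linarith

variable {m n : ℕ}

theorem prefLPval_eq_sampledLPValue (r : Fin n → ℝ) (a : Fin n → Fin m → ℝ) (d : Fin m → ℝ)
    {t : ℕ} (ht : t ≤ n) :
    prefLPval n m r a d t = sampledLPValue r a d {j : Fin n | (j : ℕ) < t} := by
  simp only [prefLPval, sampledLPValue, sampledLPFeasible, Fin.card_filter_val_lt, min_eq_right ht]

theorem prefLPval_sub_eq_expectedShortfall (r : Fin n → ℝ) (a : Fin n → Fin m → ℝ)
    (d : Fin m → ℝ) {t : ℕ} (ht : t ≤ n) :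
    (1 / (n : ℝ)) * prefLPval n m r a d n - (1 / (t : ℝ)) *
        ((∑ σ : Perm (Fin n), prefLPval n m (fun j => r (σ j)) (fun j => a (σ j)) d t) /
          (Nat.factorial n : ℝ)) =
      expectedShortfall r a d {j : Fin n | (j : ℕ) < t} := by
  have hfull : ({j : Fin n | (j : ℕ) < n} : Finset (Fin n)) = univ :=
    filter_true_of_mem fun j _ ↦ j.2
  simp only [expectedShortfall, prefLPval_eq_sampledLPValue _ _ _ ht,
    prefLPval_eq_sampledLPValue _ _ _ le_rfl, hfull, Fintype.expect_eq_sum_div_card,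
    Fintype.card_perm, Fintype.card_fin, Fin.card_filter_val_lt, min_eq_right ht,
    one_div_mul_eq_div]
  rfl

theorem min_regret_le (hn : 0 < n) {rbar abar dlb : ℝ} (hrbar : 0 ≤ rbar) (hdlb : 0 < dlb) :
    min (n * rbar) (2 * (rbar / dlb) * √(2 * abar ^ 2 * n * Real.log (m + 1))) ≤
      m * rbar + (rbar / dlb) * √n * Real.log n + m * rbar * Real.log n
        + rbar * max (max (16 * abar ^ 2) (Real.exp (16 * abar ^ 2))) (Real.exp 1) := by
  have hn0 : (0 : ℝ) < n := Nat.cast_pos.2 hn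
  have hlog : 0 ≤ Real.log n := Real.log_natCast_nonneg n
  set T := max (max (16 * abar ^ 2) (Real.exp (16 * abar ^ 2))) (Real.exp 1)
  have hT : Real.exp (16 * abar ^ 2) ≤ T := (le_max_right _ _).trans (le_max_left _ _)
  have hm0 : 0 ≤ m * rbar := by positivity
  have hsqrt0 : 0 ≤ rbar / dlb * √n * Real.log n := by positivity
  have hmlog0 : 0 ≤ m * rbar * Real.log n := by positivity
  have hT0 : 0 ≤ rbar * T := mul_nonneg hrbar ((Real.exp_nonneg _).trans hT)
  rcases le_or_gt n m with hnm | hmn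
  · have : n * rbar ≤ m * rbar := by gcongr
    exact (min_le_left _ _).trans (by linarith)
  rcases le_or_gt (Real.log n) (16 * abar ^ 2) with hlarge | hsmall
  · have : n * rbar ≤ rbar * T := by
      rw [mul_comm]
      gcongr
      exact ((Real.log_le_iff_le_exp hn0).1 hlarge).trans hT
    exact (min_le_left _ _).trans (by linarith)
  · have hlogm : Real.log (m + 1) ≤ Real.log n :=
      Real.log_le_log (by positivity) (by exact_mod_cast hmn)
    have hlogm0 : 0 ≤ Real.log (m + 1) := Real.log_nonneg (by simp)
    have hroot : √(2 * abar ^ 2 * n * Real.log (m + 1)) ≤ √n * Real.log n / 2 := by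
      refine Real.sqrt_le_iff.2 ⟨by positivity, ?_⟩
      calc 2 * abar ^ 2 * n * Real.log (m + 1) ≤ Real.log n / 4 * n * Real.log n := by
            gcongr
            linarith
        _ = (√n * Real.log n / 2) ^ 2 := by rw [div_pow, mul_pow, Real.sq_sqrt hn0.le]; ring
    have := mul_le_mul_of_nonneg_left hroot (by positivity : 0 ≤ 2 * (rbar / dlb))
    exact (min_le_right _ _).trans (by linarith)

end Prefixes

theorem stmt19_general (m n : ℕ) (r : Fin n → ℝ) (a : Fin n → Fin m → ℝ) (d : Fin m → ℝ)
    (rbar abar dlb : ℝ) (hdlb : 0 < dlb) (hr : ∀ j, |r j| ≤ rbar) (ha : ∀ j i, |a j i| ≤ abar)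
    (hd : ∀ i, dlb ≤ d i) :
    ∑ t ∈ Finset.Icc 1 n,
        ((1 / (n : ℝ)) * prefLPval n m r a d n
          - (1 / (t : ℝ)) *
            ((∑ σ : Equiv.Perm (Fin n),
                prefLPval n m (fun j => r (σ j)) (fun j => a (σ j)) d t) /
              (Nat.factorial n : ℝ)))
      ≤ min (n * rbar) (2 * (rbar / dlb) * √(2 * abar ^ 2 * n * Real.log (m + 1))) := by
  rcases n.eq_zero_or_pos with rfl | hn
  · simp
  have : NeZero n := ⟨hn.ne'⟩
  have hrbar : 0 ≤ rbar := (abs_nonneg _).trans (hr 0)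
  rw [Finset.sum_congr rfl fun t ht ↦
    prefLPval_sub_eq_expectedShortfall r a d (Finset.mem_Icc.1 ht).2]
  refine le_min ?_ ?_
  · simpa using Finset.sum_le_card_nsmul (Finset.Icc 1 n) _ _ fun t _ ↦
      expectedShortfall_le_of_abs_le (a := a) (s := {j : Fin n | (j : ℕ) < t})
        (fun i ↦ hdlb.le.trans (hd i)) hr
  · set B := rbar / dlb * √(2 * abar ^ 2 * Real.log (m + 1))
    calc _ ≤ ∑ t ∈ Finset.Icc 1 n, B * (1 / √t) := by
          refine Finset.sum_le_sum fun t ht ↦ ?_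
          obtain ⟨ht0, htn⟩ := Finset.mem_Icc.1 ht
          have hcard : ({j : Fin n | (j : ℕ) < t} : Finset (Fin n)).card = t := by
            rw [Fin.card_filter_val_lt, min_eq_right htn]
          simpa [hcard] using expectedShortfall_le_sqrt hdlb hd hr ha
            (Finset.card_pos.1 (ht0.trans_eq hcard.symm))
      _ ≤ B * (2 * √n) := by
          rw [← Finset.mul_sum]
          exact mul_le_mul_of_nonneg_left (sum_Icc_one_div_sqrt_le n) (by positivity)
      _ = 2 * (rbar / dlb) * √(2 * abar ^ 2 * n * Real.log (m + 1)) := by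
          rw [mul_right_comm (2 * abar ^ 2), Real.sqrt_mul' _ n.cast_nonneg]
          ring

/-- (Regret bound underlying Theorem 5, for the Primal-beats-dual
Algorithm of Kesselheim et al.) Under the random permutation model with data in general
position, `Σ_{t=1}^n ((1/n) R_n* − (1/t) E[R_t*(σ)])` is at most
`m r̄ + (r̄/d̲) √n log n + m r̄ log n + r̄ max{16ā², e^{16ā²}, e}`, where `R_t*(σ)` is
the optimal value of the scaled LP on the first `t` columns of the permuted data and
the expectation is the average over all `n!` permutations. -/
theorem stmt19 (m n : ℕ) (hm : 0 < m) (hn : 0 < n)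
    (r : Fin n → ℝ) (a : Fin n → Fin m → ℝ) (d : Fin m → ℝ)
    (rbar abar dlb dbar : ℝ) (hdlb : 0 < dlb)
    (hr : ∀ j, |r j| ≤ rbar) (ha : ∀ j i, |a j i| ≤ abar)
    (hd : ∀ i, dlb ≤ d i ∧ d i ≤ dbar)
    (hgen : ∀ p : Fin m → ℝ, {j | r j = ∑ i, a j i * p i}.ncard ≤ m) :
    ∑ t ∈ Finset.Icc 1 n,
        ((1 / (n : ℝ)) * prefLPval n m r a d n
          - (1 / (t : ℝ)) *
            ((∑ σ : Equiv.Perm (Fin n),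
                prefLPval n m (fun j => r (σ j)) (fun j => a (σ j)) d t) /
              (Nat.factorial n : ℝ)))
      ≤ m * rbar + (rbar / dlb) * Real.sqrt n * Real.log n + m * rbar * Real.log n
        + rbar * max (max (16 * abar ^ 2) (Real.exp (16 * abar ^ 2))) (Real.exp 1) :=
  (stmt19_general m n r a d rbar abar dlb hdlb hr ha fun i => (hd i).1).trans
    (min_regret_le hn ((abs_nonneg _).trans (hr ⟨0, hn⟩)) hdlb)
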